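/- Let h, X₁, X₂ ∈ A₁ be nonzero elements and let λ₁, λ₂ be nonzero integers such that [h,X₁] = λ₁X₁, [h,X₂] = λ₂X₂ and [X₁,X₂] = 0. Then λ₁λ₂ > 0, and there exists a nonzero complex number a such that X₁^{|λ₂|} = a·X₂^{|λ₁|}. -/

import Mathlib

noncomputable section

/-- The defining relation of the first Weyl algebra: `p * q = q * p + 1`. -/
inductive weylRel : FreeAlgebra ℂ (Fin 2) → FreeAlgebra ℂ (Fin 2) → Prop
  | rel : weylRel (FreeAlgebra.ι ℂ 0 * FreeAlgebra.ι ℂ 1)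
      (FreeAlgebra.ι ℂ 1 * FreeAlgebra.ι ℂ 0 + 1)

/-- The first Weyl algebra `A₁`, regarded as a complex Lie algebra via the commutator. -/
abbrev Weyl : Type := RingQuot weylRel

namespace WeylAux

open Polynomial

/-- The generator `p`. -/
def P : Weyl := RingQuot.mkAlgHom ℂ weylRel (FreeAlgebra.ι ℂ 0)

/-- The generator `q`. -/
def Q : Weyl := RingQuot.mkAlgHom ℂ weylRel (FreeAlgebra.ι ℂ 1)

lemma PQ : P * Q = Q * P + 1 := by
  have := RingQuot.mkAlgHom_rel ℂ weylRel.rel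
  simpa [P, Q] using this

lemma weyl_induction {C : Weyl → Prop} (hs : ∀ c : ℂ, C (algebraMap ℂ Weyl c))
    (hP : C P) (hQ : C Q) (hadd : ∀ a b, C a → C b → C (a + b))
    (hmul : ∀ a b, C a → C b → C (a * b)) (a : Weyl) : C a := by
  obtain ⟨x, rfl⟩ := RingQuot.mkAlgHom_surjective ℂ weylRel a
  induction x using FreeAlgebra.induction with
  | grade0 c => rw [AlgHom.commutes]; exact hs c
  | grade1 i => fin_cases i; exacts [hP, hQ]
  | mul a b ha hb => rw [map_mul]; exact hmul _ _ ha hb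
  | add a b ha hb => rw [map_add]; exact hadd _ _ ha hb

/-- Polynomials in the symbol variable with polynomial coefficients. -/
abbrev S : Type := ℂ[X][X]

/-- Coefficientwise derivative. -/
def dX : S →ₗ[ℂ] S :=
  Polynomial.lsum (fun i => ((Polynomial.monomial i : ℂ[X] →ₗ[ℂ[X]] S).restrictScalars ℂ) ∘ₗ
    (Polynomial.derivative : ℂ[X] →ₗ[ℂ] ℂ[X]))

lemma dX_monomial (i : ℕ) (f : ℂ[X]) : dX (monomial i f) = monomial i (derivative f) := by
  simp [dX, lsum_apply, sum_monomial_index]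

lemma dX_coeff (u : S) (k : ℕ) : (dX u).coeff k = derivative (u.coeff k) := by
  induction u using Polynomial.induction_on' with
  | add a b ha hb => simp [ha, hb]
  | monomial n f => rw [dX_monomial, coeff_monomial, coeff_monomial]; split_ifs <;> simp

/-- Multiplication by the variable of symbols. -/
def mY : S →ₗ[ℂ] S := LinearMap.mulLeft ℂ (X : S)

/-- Multiplication by the base variable. -/
def mX : S →ₗ[ℂ] S := LinearMap.mulLeft ℂ (C X : S)

lemma mY_apply (u : S) : mY u = X * u := rfl
lemma mX_apply (u : S) : mX u = C X * u := rfl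

lemma dX_Y (u : S) : dX (X * u) = X * dX u := by
  ext1 k
  cases k <;> simp [dX_coeff]

lemma dX_Yn (n : ℕ) (u : S) : dX (X ^ n * u) = X ^ n * dX u := by
  induction n with
  | zero => simp
  | succ n ih => rw [pow_succ', mul_assoc, dX_Y, ih, mul_assoc]

lemma dX_CX (u : S) : dX (C X * u) = C X * dX u + u := by
  ext1 k
  simp [dX_coeff, derivative_mul, add_comm]

/-- The regular representation on symbols. -/
def L : Weyl →ₐ[ℂ] Module.End ℂ S :=
  RingQuot.liftAlgHom ℂ ⟨FreeAlgebra.lift ℂ ![mY + dX, mX], by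
    rintro _ _ ⟨⟩
    apply LinearMap.ext
    intro u
    simp only [map_mul, FreeAlgebra.lift_ι_apply, map_add, map_one, Matrix.cons_val_zero,
      Matrix.cons_val_one, Module.End.mul_apply, LinearMap.add_apply, mY_apply, mX_apply,
      dX_CX, Module.End.one_apply]
    ring⟩

lemma L_P (u : S) : L P u = X * u + dX u := by
  simp [L, P, mY_apply]

lemma L_Q (u : S) : L Q u = C X * u := by
  simp [L, Q, mX_apply]

/-- Symbol to operator. -/
def Φ : S →ₗ[ℂ] Weyl :=
  Polynomial.lsum (fun i => LinearMap.mulRight ℂ (P ^ i) ∘ₗ (aeval (R := ℂ) Q).toLinearMap)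

lemma Φ_monomial (i : ℕ) (f : ℂ[X]) : Φ (monomial i f) = aeval Q f * P ^ i := by
  simp [Φ, lsum_apply, sum_monomial_index]

lemma P_aeval (f : ℂ[X]) : P * aeval Q f = aeval Q f * P + aeval Q (derivative f) := by
  have key : ∀ n : ℕ, P * Q ^ n = Q ^ n * P + (n : ℂ) • Q ^ (n - 1) := by
    intro n
    induction n with
    | zero => simp
    | succ n ih =>
      rw [pow_succ', ← mul_assoc, PQ, add_mul, mul_assoc, ih]
      rcases n with _ | n
      · simp
      · simp only [Nat.add_sub_cancel, mul_add, mul_smul_comm, ← pow_succ', ← mul_assoc, one_mul]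
        push_cast
        module
  induction f using Polynomial.induction_on' with
  | add a b ha hb => simp only [map_add, mul_add, add_mul, ha, hb]; abel
  | monomial n c =>
    rw [aeval_monomial, derivative_monomial, aeval_monomial, ← Algebra.smul_def, ← Algebra.smul_def,
      mul_smul_comm, key, smul_add, smul_mul_assoc, smul_smul]

lemma Φ_L (a : Weyl) : ∀ u : S, Φ (L a u) = a * Φ u := by
  induction a using weyl_induction with
  | hs c => intro u; rw [AlgHom.commutes, Module.algebraMap_end_apply, map_smul, Algebra.smul_def]
  | hP =>
    intro u
    rw [L_P]
    induction u using Polynomial.induction_on' with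
    | add a b ha hb =>
      rw [map_add Φ a b, mul_add P, ← ha, ← hb, ← map_add Φ, mul_add, map_add dX]; congr 1; abel
    | monomial n f =>
      rw [X_mul_monomial, dX_monomial, map_add, Φ_monomial, Φ_monomial, Φ_monomial, ← mul_assoc,
        P_aeval, add_mul, mul_assoc, ← pow_succ']
  | hQ =>
    intro u
    rw [L_Q]
    induction u using Polynomial.induction_on' with
    | add a b ha hb => rw [map_add Φ a b, mul_add Q, ← ha, ← hb, ← map_add Φ, mul_add]
    | monomial n f =>
      rw [C_mul_monomial, Φ_monomial, Φ_monomial, map_mul, aeval_X, mul_assoc]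
  | hadd a b ha hb => intro u; rw [map_add, LinearMap.add_apply, map_add, ha, hb, add_mul]
  | hmul a b ha hb => intro u; rw [map_mul, Module.End.mul_apply, ha, hb, mul_assoc]

/-- The full symbol. -/
def σ : Weyl →ₗ[ℂ] S where
  toFun a := L a 1
  map_add' a b := by simp
  map_smul' c a := by simp

lemma σ_mul (a b : Weyl) : σ (a * b) = L a (σ b) := by
  simp [σ]

lemma Φ_one : Φ 1 = 1 := by
  have := Φ_monomial 0 1
  simpa using this

lemma Φ_σ (a : Weyl) : Φ (σ a) = a := by
  change Φ (L a 1) = a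
  rw [Φ_L, Φ_one, mul_one]

lemma σ_inj {a b : Weyl} (h : σ a = σ b) : a = b := by
  rw [← Φ_σ a, h, Φ_σ]

lemma σ_one : σ 1 = 1 := by simp [σ]

lemma L_aeval (f : ℂ[X]) (u : S) : L (aeval Q f) u = C f * u := by
  induction f using Polynomial.induction_on with
  | C c => simp only [aeval_C, AlgHom.commutes, Module.algebraMap_end_apply]
           ext1 k
           rw [coeff_smul, coeff_C_mul, smul_eq_C_mul]
  | add f g hf hg => simp only [map_add, LinearMap.add_apply, hf, hg, add_mul]
  | monomial n c h =>
    rw [pow_succ', mul_left_comm, map_mul, aeval_X, map_mul, Module.End.mul_apply, h, L_Q]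
    simp only [C_mul]
    ring

/-- Remainder term in `P ^ n` acting on `u`. -/
lemma E_bound (n m : ℕ) (u : S) (hu : ∀ k, m < k → u.coeff k = 0) :
    ∀ k, n + m ≤ k + 1 →
      (L (P ^ n) u - X ^ n * u - (n : S) * X ^ (n - 1) * dX u).coeff k = 0 := by
  induction n with
  | zero => intro k _; simp
  | succ n ih =>
    intro k hk
    set E := L (P ^ n) u - X ^ n * u - (n : S) * X ^ (n - 1) * dX u with hE
    have h1 : L (P ^ n) u = E + X ^ n * u + (n : S) * X ^ (n - 1) * dX u := by rw [hE]; ring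
    have h2 : dX ((n : S) * X ^ (n - 1) * dX u) = (n : S) * (X ^ (n - 1) * dX (dX u)) := by
      rw [mul_assoc, ← nsmul_eq_mul, map_nsmul, dX_Yn, nsmul_eq_mul]
    have h3 : L (P ^ (n + 1)) u - X ^ (n + 1) * u - ((n + 1 : ℕ) : S) * X ^ (n + 1 - 1) * dX u
        = X * E + dX E + (n : S) * (X ^ (n - 1) * dX (dX u)) := by
      rw [pow_succ', map_mul, Module.End.mul_apply, L_P, h1, map_add, map_add, h2, dX_Yn]
      rcases n with _ | n
      · simp; ring
      · simp only [Nat.add_sub_cancel]; push_cast; ring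
    rw [h3, coeff_add, coeff_add, dX_coeff, ih k (by omega)]
    have h4 : ((n : S) * (X ^ (n - 1) * dX (dX u))).coeff k = 0 := by
      rcases n with _ | n
      · simp
      · rw [← nsmul_eq_mul, coeff_smul, coeff_X_pow_mul', Nat.add_sub_cancel, dX_coeff, dX_coeff]
        rw [if_pos (by omega), hu _ (by omega)]; simp
    rw [h4]
    cases k with
    | zero => simp
    | succ k => simp [ih k (by omega)]

lemma L_bound (n m : ℕ) (s u : S) (hs : ∀ k, n < k → s.coeff k = 0)
    (hu : ∀ k, m < k → u.coeff k = 0) :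
    ∀ k, n + m ≤ k + 1 → (L (Φ s) u - s * u - derivative s * dX u).coeff k = 0 := by
  intro k hk
  have h1 : L (Φ s) u - s * u - derivative s * dX u = ∑ i ∈ Finset.range (n + 1),
      C (s.coeff i) * (L (P ^ i) u - X ^ i * u - (i : S) * X ^ (i - 1) * dX u) := by
    have hs' : s = ∑ i ∈ Finset.range (n + 1), monomial i (s.coeff i) := by
      apply as_sum_range'
      rw [Nat.lt_succ_iff, natDegree_le_iff_coeff_eq_zero]
      exact hs
    generalize s.coeff = c at hs'
    rw [hs']
    simp only [map_sum, LinearMap.sum_apply, Finset.sum_mul, ← Finset.sum_sub_distrib]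
    refine Finset.sum_congr rfl fun i _ => ?_
    rw [Φ_monomial, map_mul, Module.End.mul_apply, L_aeval, derivative_monomial,
      ← C_mul_X_pow_eq_monomial, ← C_mul_X_pow_eq_monomial, C_mul, map_natCast]
    ring
  rw [h1, finsetSum_coeff]
  refine Finset.sum_eq_zero fun i hi => ?_
  rw [coeff_C_mul, E_bound i m u hu k (by have := Finset.mem_range.1 hi; omega), mul_zero]


lemma dX_natDegree {u : S} {m : ℕ} (hu : u.natDegree ≤ m) : (dX u).natDegree ≤ m := by
  rw [natDegree_le_iff_coeff_eq_zero] at hu ⊢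
  intro k hk
  rw [dX_coeff, hu k hk, derivative_zero]

lemma coeff_derivative_mul {s w : S} {n m k : ℕ} (hs : s.natDegree ≤ n) (hw : w.natDegree ≤ m)
    (hk : k + 1 = n + m) :
    (derivative s * w).coeff k = (n : ℂ[X]) * s.coeff n * w.coeff m := by
  rcases n with _ | n
  · rw [derivative_of_natDegree_zero (by omega)]; simp
  · have : k = n + m := by omega
    subst this
    rw [coeff_mul_add_eq_of_natDegree_le _ hw, coeff_derivative]
    · push_cast; ring
    · exact (natDegree_derivative_le s).trans (by omega)

lemma coeff_derivative_mul_zero {s w : S} {n m k : ℕ} (hs : s.natDegree ≤ n)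
    (hw : w.natDegree ≤ m) (hk : n + m ≤ k) : (derivative s * w).coeff k = 0 := by
  by_cases h0 : s.natDegree = 0
  · rw [derivative_of_natDegree_zero h0]; simp
  · apply coeff_eq_zero_of_natDegree_lt
    have h1 := natDegree_derivative_le s
    have h2 := natDegree_mul_le (p := derivative s) (q := w)
    omega

lemma σ_mul_bound {n m : ℕ} {a b : Weyl} (ha : (σ a).natDegree ≤ n) (hb : (σ b).natDegree ≤ m)
    {k : ℕ} (hk : n + m ≤ k + 1) :
    (σ (a * b)).coeff k = (σ a * σ b).coeff k + (derivative (σ a) * dX (σ b)).coeff k := by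
  have := L_bound n m (σ a) (σ b) (natDegree_le_iff_coeff_eq_zero.1 ha)
    (natDegree_le_iff_coeff_eq_zero.1 hb) k hk
  rw [Φ_σ, ← σ_mul, coeff_sub, coeff_sub] at this
  linear_combination this

lemma σ_mul_coeff {n m : ℕ} {a b : Weyl} (ha : (σ a).natDegree ≤ n) (hb : (σ b).natDegree ≤ m)
    {k : ℕ} (hk : n + m ≤ k) : (σ (a * b)).coeff k = (σ a * σ b).coeff k := by
  rw [σ_mul_bound ha hb (by omega), coeff_derivative_mul_zero ha (dX_natDegree hb) hk, add_zero]

lemma σ_mul_natDegree_le {n m : ℕ} {a b : Weyl} (ha : (σ a).natDegree ≤ n)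
    (hb : (σ b).natDegree ≤ m) : (σ (a * b)).natDegree ≤ n + m := by
  rw [natDegree_le_iff_coeff_eq_zero]
  intro k hk
  rw [σ_mul_coeff ha hb hk.le]
  apply coeff_eq_zero_of_natDegree_lt
  have := natDegree_mul_le (p := σ a) (q := σ b)
  omega

lemma σ_mul_top (a b : Weyl) : (σ (a * b)).coeff ((σ a).natDegree + (σ b).natDegree) =
    (σ a).leadingCoeff * (σ b).leadingCoeff := by
  rw [σ_mul_coeff le_rfl le_rfl le_rfl, coeff_mul_add_eq_of_natDegree_le le_rfl le_rfl]
  rfl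

lemma σ_ne {a : Weyl} (h : a ≠ 0) : σ a ≠ 0 := by
  intro h0
  exact h (σ_inj (by rw [h0, map_zero]))

instance : NoZeroDivisors Weyl where
  eq_zero_or_eq_zero_of_mul_eq_zero {a b} h := by
    by_contra! hc
    have := σ_mul_top a b
    rw [h, map_zero, coeff_zero] at this
    exact mul_ne_zero (leadingCoeff_ne_zero.2 (σ_ne hc.1)) (leadingCoeff_ne_zero.2 (σ_ne hc.2))
      this.symm

instance : Nontrivial Weyl := ⟨⟨1, 0, fun h => by
  have := congrArg σ h
  rw [σ_one, map_zero] at this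
  exact one_ne_zero this⟩⟩

instance : IsDomain Weyl := NoZeroDivisors.to_isDomain _

lemma σ_pow_natDegree_le {n : ℕ} {a : Weyl} (ha : (σ a).natDegree ≤ n) (i : ℕ) :
    (σ (a ^ i)).natDegree ≤ i * n := by
  induction i with
  | zero => simp [σ_one]
  | succ i ih => rw [pow_succ, Nat.succ_mul]; exact σ_mul_natDegree_le ih ha

lemma comm_symbol {n m : ℕ} {a b : Weyl} (ha : (σ a).natDegree ≤ n) (hb : (σ b).natDegree ≤ m)
    (h : a * b = b * a) :
    (n : ℂ[X]) * (σ a).coeff n * derivative ((σ b).coeff m) =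
      (m : ℂ[X]) * (σ b).coeff m * derivative ((σ a).coeff n) := by
  rcases Nat.eq_zero_or_pos (n + m) with h0 | h0
  · obtain ⟨rfl, rfl⟩ : n = 0 ∧ m = 0 := by omega
    simp
  · obtain ⟨k, hk⟩ : ∃ k, k + 1 = n + m := ⟨n + m - 1, by omega⟩
    have h1 := σ_mul_bound ha hb (k := k) (by omega)
    have h2 := σ_mul_bound hb ha (k := k) (by omega)
    rw [h, h2, mul_comm (σ b) (σ a), coeff_derivative_mul hb (dX_natDegree ha) (by omega),
      coeff_derivative_mul ha (dX_natDegree hb) hk, dX_coeff, dX_coeff] at h1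
    exact (add_left_cancel h1).symm

lemma wronsk_degree {r g : ℂ[X]} (hr : r ≠ 0) (hg : g ≠ 0)
    (h : derivative r * g = r * derivative g) : r.natDegree = g.natDegree := by
  have aux : ∀ f : ℂ[X], (X * derivative f).natDegree ≤ f.natDegree ∧
      (X * derivative f).coeff f.natDegree = f.natDegree * f.leadingCoeff := by
    intro f
    constructor
    · rw [natDegree_le_iff_coeff_eq_zero]
      intro k hk
      obtain ⟨k, rfl⟩ : ∃ j, k = j + 1 := ⟨k - 1, by omega⟩
      rw [coeff_X_mul, coeff_derivative, coeff_eq_zero_of_natDegree_lt hk, zero_mul]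
    · unfold leadingCoeff
      rcases hf : f.natDegree with _ | d
      · simp
      · rw [coeff_X_mul, coeff_derivative]; push_cast; ring
  have h1 : (X * derivative r) * g = r * (X * derivative g) := by linear_combination X * h
  have h2 := congrArg (fun f => f.coeff (r.natDegree + g.natDegree)) h1
  rw [coeff_mul_add_eq_of_natDegree_le (aux r).1 le_rfl,
    coeff_mul_add_eq_of_natDegree_le le_rfl (aux g).1, (aux r).2, (aux g).2] at h2
  have h3 : ((r.natDegree : ℂ) - g.natDegree) * (r.leadingCoeff * g.leadingCoeff) = 0 := by
    unfold leadingCoeff at h2 ⊢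
    linear_combination h2
  have h4 := (mul_eq_zero.1 h3).resolve_right
    (mul_ne_zero (leadingCoeff_ne_zero.2 hr) (leadingCoeff_ne_zero.2 hg))
  exact_mod_cast sub_eq_zero.1 h4

lemma wronsk {r g : ℂ[X]} (hg : g ≠ 0) (h : derivative r * g = r * derivative g) :
    ∃ c : ℂ, r = c • g := by
  by_cases hr : r = 0
  · exact ⟨0, by simp [hr]⟩
  have hd := wronsk_degree hr hg h
  have hgl := leadingCoeff_ne_zero.2 hg
  refine ⟨r.leadingCoeff / g.leadingCoeff, ?_⟩
  set c := r.leadingCoeff / g.leadingCoeff with hc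
  by_contra hne
  have hs : r - c • g ≠ 0 := sub_ne_zero.2 hne
  have h1 : (r - c • g).natDegree = g.natDegree := by
    apply wronsk_degree hs hg
    rw [derivative_sub, derivative_smul, sub_mul, sub_mul, h, smul_mul_assoc, smul_mul_assoc,
      mul_comm (derivative g)]
  have h2 : (r - c • g).leadingCoeff = 0 := by
    have h3 : r.coeff g.natDegree = r.leadingCoeff := by rw [← hd]; rfl
    rw [leadingCoeff, h1, coeff_sub, coeff_smul, h3, smul_eq_mul, coeff_natDegree, hc,
      div_mul_cancel₀ _ hgl, sub_self]
  exact leadingCoeff_ne_zero.2 hs h2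

/-- Elements commuting with `x` of order `< N`. -/
def W (x : Weyl) (N : ℕ) : Submodule ℂ Weyl where
  carrier := {y | x * y = y * x ∧ ∀ k, N ≤ k → (σ y).coeff k = 0}
  add_mem' := by
    rintro a b ⟨h1, h2⟩ ⟨h3, h4⟩
    refine ⟨by rw [mul_add, add_mul, h1, h3], fun k hk => ?_⟩
    rw [map_add, coeff_add, h2 k hk, h4 k hk, add_zero]
  zero_mem' := by simp
  smul_mem' := by
    rintro c a ⟨h1, h2⟩
    refine ⟨by rw [mul_smul_comm, smul_mul_assoc, h1], fun k hk => ?_⟩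
    rw [map_smul, coeff_smul, h2 k hk, smul_zero]

lemma W_span (x : Weyl) (hx : 0 < (σ x).natDegree) (N : ℕ) :
    ∃ s : Finset Weyl, s.card ≤ N ∧ W x N ≤ Submodule.span ℂ (s : Set Weyl) := by
  classical
  induction N with
  | zero =>
    refine ⟨∅, by simp, ?_⟩
    rintro y ⟨_, hy⟩
    have : σ y = 0 := by ext1 k; rw [hy k (Nat.zero_le k), coeff_zero]
    have : y = 0 := σ_inj (by rw [this, map_zero])
    rw [this]
    exact Submodule.zero_mem _
  | succ N ih =>
    obtain ⟨s, hs, hW⟩ := ih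
    by_cases hex : ∃ e ∈ W x (N + 1), (σ e).coeff N ≠ 0
    · obtain ⟨e, he, heN⟩ := hex
      refine ⟨insert e s, (Finset.card_insert_le _ _).trans (by omega), ?_⟩
      intro y hy
      have key : ∀ z ∈ W x (N + 1), ((σ x).natDegree : ℂ[X]) * (σ x).leadingCoeff *
          derivative ((σ z).coeff N) = (N : ℂ[X]) * (σ z).coeff N *
            derivative ((σ x).leadingCoeff) := by
        intro z hz
        exact comm_symbol le_rfl
          (natDegree_le_iff_coeff_eq_zero.2 fun k hk => hz.2 k hk) hz.1
      have hxl : ((σ x).natDegree : ℂ[X]) * (σ x).leadingCoeff ≠ 0 := by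
        refine mul_ne_zero (by exact_mod_cast hx.ne') (leadingCoeff_ne_zero.2 ?_)
        rintro h0
        rw [h0] at hx
        simp at hx
      obtain ⟨c, hc⟩ := wronsk (r := (σ y).coeff N) heN (by
        apply mul_left_cancel₀ hxl
        linear_combination (σ e).coeff N * key y hy - (σ y).coeff N * key e he)
      have hmem : y - c • e ∈ W x N := by
        have h1 := Submodule.sub_mem _ hy (Submodule.smul_mem _ c he)
        refine ⟨h1.1, fun k hk => ?_⟩
        rcases hk.eq_or_lt with rfl | hk
        · rw [map_sub, map_smul, coeff_sub, coeff_smul, hc, sub_self]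
        · exact h1.2 k hk
      have : y = (y - c • e) + c • e := by abel
      rw [this]
      refine Submodule.add_mem _ (Submodule.span_mono (by simp) (hW hmem))
        (Submodule.smul_mem _ _ (Submodule.subset_span (by simp)))
    · push Not at hex
      refine ⟨s, by omega, fun y hy => hW ⟨hy.1, fun k hk => ?_⟩⟩
      rcases hk.eq_or_lt with rfl | hk
      · exact hex y hy
      · exact hy.2 k hk

lemma dep_of_span {y z : Weyl} (a b : ℕ)
    (hspan : ∀ N, ∃ s : Finset Weyl, s.card ≤ N + 1 ∧
      ∀ i j : ℕ, i * a + j * b ≤ N → y ^ i * z ^ j ∈ Submodule.span ℂ (s : Set Weyl)) :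
    ∃ K : ℕ, ∃ c : Fin K × Fin K → ℂ, (∑ x, c x • (y ^ (x.1 : ℕ) * z ^ (x.2 : ℕ))) = 0 ∧
      ∃ x, c x ≠ 0 := by
  set K := a + b + 1 with hK
  obtain ⟨s, hs, hmem⟩ := hspan (K * (a + b))
  refine ⟨K + 1, ?_⟩
  rw [← Fintype.not_linearIndependent_iff (R := ℂ)
    (v := fun x : Fin (K + 1) × Fin (K + 1) => y ^ (x.1 : ℕ) * z ^ (x.2 : ℕ))]
  intro hli
  have h1 := linearIndependent_le_span' _ hli (s : Set Weyl) (by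
    rintro _ ⟨x, rfl⟩
    apply hmem
    have h1 : (x.1 : ℕ) ≤ K := Nat.lt_succ_iff.1 x.1.2
    have h2 : (x.2 : ℕ) ≤ K := Nat.lt_succ_iff.1 x.2.2
    nlinarith)
  simp only [Cardinal.mk_fintype, Fintype.card_prod, Fintype.card_fin] at h1
  have h2 : (K + 1) * (K + 1) ≤ s.card := by
    have := Nat.cast_le.1 h1
    simpa using this
  nlinarith


lemma order_zero {y : Weyl} (hy : (σ y).natDegree = 0) : y = aeval Q ((σ y).coeff 0) := by
  have h1 := eq_C_of_natDegree_eq_zero hy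
  have h2 := Φ_monomial 0 ((σ y).coeff 0)
  rw [monomial_zero_left, ← h1, Φ_σ, pow_zero, mul_one] at h2
  exact h2

lemma dep {y z : Weyl} (h : y * z = z * y) :
    ∃ K : ℕ, ∃ c : Fin K × Fin K → ℂ, (∑ x, c x • (y ^ (x.1 : ℕ) * z ^ (x.2 : ℕ))) = 0 ∧
      ∃ x, c x ≠ 0 := by
  classical
  have hc : Commute y z := h
  by_cases h0 : (σ y).natDegree = 0 ∧ (σ z).natDegree = 0
  · have hy := order_zero h0.1
    have hz := order_zero h0.2
    set f := (σ y).coeff 0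
    set g := (σ z).coeff 0
    apply dep_of_span f.natDegree g.natDegree
    intro N
    refine ⟨(Finset.range (N + 1)).image (fun k => Q ^ k),
      Finset.card_image_le.trans (by simp), fun i j hij => ?_⟩
    rw [hy, hz, ← map_pow, ← map_pow, ← map_mul, aeval_eq_sum_range' (n := N + 1)]
    · refine Submodule.sum_mem _ fun k hk => Submodule.smul_mem _ _ (Submodule.subset_span ?_)
      exact Finset.mem_coe.2 (Finset.mem_image_of_mem _ hk)
    · have h1 := natDegree_mul_le (p := f ^ i) (q := g ^ j)
      have h2 := natDegree_pow_le (p := f) (n := i)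
      have h3 := natDegree_pow_le (p := g) (n := j)
      omega
  · obtain ⟨x, hx, hxy, hxz⟩ : ∃ x : Weyl, 0 < (σ x).natDegree ∧ Commute x y ∧ Commute x z := by
      by_cases h1 : (σ y).natDegree = 0
      · exact ⟨z, by omega, hc.symm, Commute.refl z⟩
      · exact ⟨y, by omega, Commute.refl y, hc⟩
    apply dep_of_span (σ y).natDegree (σ z).natDegree
    intro N
    obtain ⟨s, hs, hW⟩ := W_span x hx (N + 1)
    refine ⟨s, hs, fun i j hij => hW ⟨((hxy.pow_right i).mul_right (hxz.pow_right j)).eq, ?_⟩⟩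
    intro k hk
    apply coeff_eq_zero_of_natDegree_lt
    have := σ_mul_natDegree_le (σ_pow_natDegree_le (le_refl (σ y).natDegree) i)
      (σ_pow_natDegree_le (le_refl (σ z).natDegree) j)
    omega

lemma hom_root {u v : Weyl} (huv : Commute u v) (hv : v ≠ 0) (n : ℕ) :
    ∀ (d : ℕ) (p : ℂ[X]), p ≠ 0 → p.natDegree = n → n ≤ d →
      (p.sum fun i c => c • (u ^ i * v ^ (d - i))) = 0 → ∃ r : ℂ, u = r • v := by
  induction n with
  | zero =>
    intro d p hp hn _ hsum
    rw [eq_C_of_natDegree_eq_zero hn, sum_C_index (by simp)] at hsum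
    have h1 : p.coeff 0 ≠ 0 := by
      intro h1
      apply hp
      rw [eq_C_of_natDegree_eq_zero hn, h1, C_0]
    simp [h1, hv] at hsum
  | succ n ih =>
    intro d p hp hn hd hsum
    obtain ⟨r, hr⟩ := IsAlgClosed.exists_root p (by
      rw [degree_eq_natDegree hp, hn]; exact_mod_cast Nat.succ_ne_zero n)
    obtain ⟨q, rfl⟩ := dvd_iff_isRoot.2 hr
    have hq : q ≠ 0 := right_ne_zero_of_mul hp
    have hqn : q.natDegree = n := by
      rw [natDegree_mul (X_sub_C_ne_zero r) hq, natDegree_X_sub_C] at hn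
      omega
    obtain ⟨d, rfl⟩ : ∃ e, d = e + 1 := ⟨d - 1, by omega⟩
    have hfac : (u - r • v) * (q.sum fun i c => c • (u ^ i * v ^ (d - i))) = 0 := by
      rw [← hsum, sum_over_range' (n := n + 1) _ (by simp) (by omega),
        sum_over_range' (n := n + 2) _ (by simp) (by omega)]
      have e1 : ∀ i, ((X - C r) * q).coeff i = (X * q).coeff i - r * q.coeff i := by
        intro i; rw [sub_mul, coeff_sub, coeff_C_mul]
      have e2 : ∀ (a b : ℂ) (x : Weyl), (a - b) • x = a • x - b • x := fun a b x => sub_smul a b x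
      simp only [e1, e2, Finset.sum_sub_distrib]
      have e3 := Finset.sum_range_succ'
        (fun i => (X * q).coeff i • (u ^ i * v ^ (d + 1 - i))) (n + 1)
      have e4 := Finset.sum_range_succ
        (fun i => (r * q.coeff i) • (u ^ i * v ^ (d + 1 - i))) (n + 1)
      refine Eq.trans ?_ (congrArg₂ (· - ·) e3.symm e4.symm)
      rw [coeff_eq_zero_of_natDegree_lt (p := q) (n := n + 1) (by omega)]
      simp only [coeff_X_mul, coeff_X_mul_zero, zero_smul, mul_zero, add_zero, sub_mul,
        Finset.mul_sum]
      refine (Finset.sum_sub_distrib _ _).trans (congrArg₂ (fun a b : Weyl => a - b) ?_ ?_)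
      · refine Finset.sum_congr rfl fun i _ => ?_
        rw [mul_smul_comm, ← mul_assoc, ← pow_succ', Nat.add_sub_add_right]
      · refine Finset.sum_congr rfl fun i hi => ?_
        have hi := Finset.mem_range.1 hi
        rw [mul_smul_comm, smul_mul_assoc, ← mul_assoc, (huv.symm.pow_right i).eq, mul_assoc,
          ← pow_succ', smul_smul, mul_comm r, Nat.sub_add_comm (by omega)]
    rcases mul_eq_zero.1 hfac with h1 | h1
    · exact ⟨r, sub_eq_zero.1 h1⟩
    · exact ih d q hq hqn (by omega) h1

lemma eig_mul {h x y : Weyl} {a b : ℂ} (hx : ⁅h, x⁆ = a • x) (hy : ⁅h, y⁆ = b • y) :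
    ⁅h, x * y⁆ = (a + b) • (x * y) := by
  rw [Ring.lie_def] at *
  have : h * (x * y) - x * y * h = (h * x - x * h) * y + x * (h * y - y * h) := by
    simp only [sub_mul, mul_sub, mul_assoc]
    abel
  rw [this, hx, hy, smul_mul_assoc, mul_smul_comm, add_smul]

lemma eig_pow {h x : Weyl} {a : ℂ} (hx : ⁅h, x⁆ = a • x) (n : ℕ) :
    ⁅h, x ^ n⁆ = (n * a) • x ^ n := by
  induction n with
  | zero => simp [Ring.lie_def]
  | succ n ih =>
    rw [pow_succ, eig_mul ih hx]
    congr 1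
    push_cast
    ring

lemma eig_smul {h x : Weyl} {a : ℂ} (hx : ⁅h, x⁆ = a • x) (c : ℂ) :
    ⁅h, c • x⁆ = a • (c • x) := by
  rw [Ring.lie_def] at *
  have h1 : h * (c • x) - (c • x) * h = c • (h * x - x * h) := by
    rw [mul_smul_comm, smul_mul_assoc]
    exact (smul_sub c _ _).symm
  rw [h1, hx, smul_comm]

lemma eig_group {ι : Type} [Fintype ι] (h : Weyl) (v : ι → Weyl) (μ : ι → ℂ)
    (hv : ∀ i, ⁅h, v i⁆ = μ i • v i) (hsum : ∑ i, v i = 0) (ν : ℂ) :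
    ∑ i with μ i = ν, v i = 0 := by
  classical
  let T : Module.End ℂ Weyl := LinearMap.mulLeft ℂ h - LinearMap.mulRight ℂ h
  have hT : ∀ x, T x = ⁅h, x⁆ := fun x => by simp [T, Ring.lie_def]
  have hind := (iSupIndep_iff_finsetSum_eq_zero_imp_eq_zero _).1
    (Module.End.eigenspaces_iSupIndep T) (Finset.univ.image μ)
    (fun ν => ∑ i with μ i = ν, v i) (by
      intro ν _
      refine Submodule.sum_mem _ fun i hi => ?_
      rw [Module.End.mem_eigenspace_iff, hT, hv, (Finset.mem_filter.1 hi).2]) (by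
      rw [Finset.sum_fiberwise_of_maps_to (fun i _ => Finset.mem_image_of_mem _ (Finset.mem_univ i)),
        hsum])
  by_cases hν : ν ∈ Finset.univ.image μ
  · exact hind ν hν
  · apply Finset.sum_eq_zero
    intro i hi
    exact absurd (Finset.mem_image.2 ⟨i, Finset.mem_univ i, (Finset.mem_filter.1 hi).2⟩) hν

/-- A homogeneous relation between `u` and `v` with injective exponents gives proportionality. -/
lemma root_of_sum {ι : Type} (s : Finset ι) (c : ι → ℂ) (e : ι → ℕ) (d : ℕ) {u v : Weyl}
    (huv : Commute u v) (hv : v ≠ 0) (he : ∀ i ∈ s, ∀ j ∈ s, e i = e j → i = j)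
    (hed : ∀ i ∈ s, e i ≤ d) (i₀ : ι) (hi₀ : i₀ ∈ s) (hc : c i₀ ≠ 0)
    (hsum : ∑ i ∈ s, c i • (u ^ e i * v ^ (d - e i)) = 0) : ∃ r : ℂ, u = r • v := by
  classical
  let p : ℂ[X] := ∑ i ∈ s, monomial (e i) (c i)
  have hp : p ≠ 0 := by
    intro h0
    have h1 : p.coeff (e i₀) = c i₀ := by
      simp only [p, finsetSum_coeff, coeff_monomial]
      rw [Finset.sum_eq_single_of_mem i₀ hi₀, if_pos rfl]
      intro j hj hne
      rw [if_neg]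
      exact fun h => hne (he j hj i₀ hi₀ h)
    rw [h0, coeff_zero] at h1
    exact hc h1.symm
  have hpd : p.natDegree ≤ d := natDegree_sum_le_of_forall_le _ _ fun i hi =>
    (natDegree_monomial_le _).trans (hed i hi)
  refine hom_root huv hv p.natDegree d p hp rfl hpd ?_
  rw [← hsum]
  let Λ : ℂ[X] →ₗ[ℂ] Weyl :=
    Polynomial.lsum fun i => LinearMap.toSpanSingleton ℂ Weyl (u ^ i * v ^ (d - i))
  have hΛ : ∀ q : ℂ[X], Λ q = q.sum fun i c => c • (u ^ i * v ^ (d - i)) := fun q => by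
    simp [Λ, lsum_apply]
  rw [← hΛ, map_sum]
  refine Finset.sum_congr rfl fun i _ => ?_
  rw [hΛ, sum_monomial_index]
  simp

lemma same_case {h y z : Weyl} {μ : ℂ} (hμ : μ ≠ 0) (hy0 : y ≠ 0) (hz0 : z ≠ 0)
    (hy : ⁅h, y⁆ = μ • y) (hz : ⁅h, z⁆ = μ • z) (hc : Commute y z) :
    ∃ r : ℂ, r ≠ 0 ∧ y = r • z := by
  obtain ⟨K, c, hsum, x₀, hx₀⟩ := dep hc.eq
  have hg := eig_group h (fun x => c x • (y ^ (x.1 : ℕ) * z ^ (x.2 : ℕ)))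
    (fun x => (x.1 : ℕ) * μ + (x.2 : ℕ) * μ) (fun x =>
      eig_smul (eig_mul (eig_pow hy _) (eig_pow hz _)) _) hsum
    ((x₀.1 : ℕ) * μ + (x₀.2 : ℕ) * μ)
  have hmem : ∀ x : Fin K × Fin K, ((x.1 : ℕ) * μ + (x.2 : ℕ) * μ =
      (x₀.1 : ℕ) * μ + (x₀.2 : ℕ) * μ) → (x.1 : ℕ) + x.2 = x₀.1 + x₀.2 := by
    intro x hx
    rw [← add_mul, ← add_mul] at hx
    exact_mod_cast mul_right_cancel₀ hμ hx
  obtain ⟨r, hr⟩ := root_of_sum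
      (Finset.univ.filter fun x : Fin K × Fin K => ((x.1 : ℕ) * μ + (x.2 : ℕ) * μ =
        (x₀.1 : ℕ) * μ + (x₀.2 : ℕ) * μ)) c (fun x => (x.1 : ℕ)) (x₀.1 + x₀.2) hc hz0 (by
      intro i hi j hj hij
      have h1 := hmem i (Finset.mem_filter.1 hi).2
      have h2 := hmem j (Finset.mem_filter.1 hj).2
      ext <;> omega) (by
      intro i hi
      have h1 := hmem i (Finset.mem_filter.1 hi).2
      omega) x₀ (Finset.mem_filter.2 ⟨Finset.mem_univ _, rfl⟩) hx₀ (by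
      rw [← hg]
      refine Finset.sum_congr rfl fun i hi => ?_
      have h1 := hmem i (Finset.mem_filter.1 hi).2
      rw [← h1, Nat.add_sub_cancel_left])
  refine ⟨r, ?_, hr⟩
  rintro rfl
  rw [zero_smul] at hr
  exact hy0 hr

lemma opp_case {h y z : Weyl} {μ : ℂ} (hμ : μ ≠ 0) (hy0 : y ≠ 0) (hz0 : z ≠ 0)
    (hy : ⁅h, y⁆ = μ • y) (hz : ⁅h, z⁆ = (-μ) • z) (hc : Commute y z) : False := by
  obtain ⟨K, c, hsum, x₀, hx₀⟩ := dep hc.eq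
  have hg := eig_group h (fun x => c x • (y ^ (x.1 : ℕ) * z ^ (x.2 : ℕ)))
    (fun x => (x.1 : ℕ) * μ + (x.2 : ℕ) * (-μ)) (fun x =>
      eig_smul (eig_mul (eig_pow hy _) (eig_pow hz _)) _) hsum
    ((x₀.1 : ℕ) * μ + (x₀.2 : ℕ) * (-μ))
  have hmem : ∀ x : Fin K × Fin K, ((x.1 : ℕ) * μ + (x.2 : ℕ) * (-μ) =
      (x₀.1 : ℕ) * μ + (x₀.2 : ℕ) * (-μ)) → (x.1 : ℕ) + x₀.2 = x₀.1 + x.2 := by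
    intro x hx
    have : (((x.1 : ℕ) : ℂ) + (x₀.2 : ℕ)) * μ = ((x₀.1 : ℕ) + (x.2 : ℕ)) * μ := by
      linear_combination hx
    exact_mod_cast mul_right_cancel₀ hμ this
  have hK : (x₀.2 : ℕ) < K := x₀.2.2
  obtain ⟨r, hr⟩ := root_of_sum (u := y * z) (v := 1)
      (Finset.univ.filter fun x : Fin K × Fin K => ((x.1 : ℕ) * μ + (x.2 : ℕ) * (-μ) =
        (x₀.1 : ℕ) * μ + (x₀.2 : ℕ) * (-μ))) c (fun x => (x.2 : ℕ)) K
      (Commute.one_right _) one_ne_zero (by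
      intro i hi j hj hij
      have h1 := hmem i (Finset.mem_filter.1 hi).2
      have h2 := hmem j (Finset.mem_filter.1 hj).2
      ext <;> omega) (fun i _ => i.2.2.le) x₀
      (Finset.mem_filter.2 ⟨Finset.mem_univ _, rfl⟩) hx₀ (by
      have hne : y ^ (K + x₀.1 - x₀.2) ≠ 0 := pow_ne_zero _ hy0
      refine (mul_eq_zero.1 (?_ : y ^ (K + x₀.1 - x₀.2 : ℕ) * _ = 0)).resolve_left hne
      rw [← mul_zero (y ^ K), ← hg, Finset.mul_sum, Finset.mul_sum]
      refine Finset.sum_congr rfl fun i hi => ?_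
      have h1 := hmem i (Finset.mem_filter.1 hi).2
      rw [one_pow, mul_one, hc.mul_pow, mul_smul_comm, mul_smul_comm, ← mul_assoc, ← mul_assoc,
        ← pow_add, ← pow_add]
      have h2 : K + x₀.1 - x₀.2 + i.2 = K + i.1 := by omega
      rw [h2])
  have hyz : y * z ≠ 0 := mul_ne_zero hy0 hz0
  have hr0 : r ≠ 0 := by
    rintro rfl
    rw [zero_smul] at hr
    exact hyz hr
  have htop := σ_mul_top y z
  rw [hr, map_smul, σ_one] at htop
  have hlc := mul_ne_zero (leadingCoeff_ne_zero.2 (σ_ne hy0)) (leadingCoeff_ne_zero.2 (σ_ne hz0))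
  have hdeg : (σ y).natDegree + (σ z).natDegree = 0 := by
    by_contra hne
    rw [coeff_smul, coeff_one, if_neg hne, smul_zero] at htop
    exact hlc htop.symm
  rw [hdeg, coeff_smul, coeff_one_zero] at htop
  have hunit : IsUnit ((σ y).leadingCoeff) := by
    apply isUnit_of_mul_isUnit_left (y := (σ z).leadingCoeff)
    rw [← htop, smul_eq_C_mul, mul_one]
    exact isUnit_C.2 hr0.isUnit
  obtain ⟨w, _, hw⟩ := isUnit_iff.1 hunit
  have h0 : (σ y).natDegree = 0 := by omega
  have hyw := order_zero h0
  rw [← h0, coeff_natDegree, ← hw, aeval_C] at hyw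
  have : ⁅h, y⁆ = 0 := by
    rw [hyw, Ring.lie_def, Algebra.commutes, sub_self]
  rw [this] at hy
  exact (smul_ne_zero hμ hy0) hy.symm

end WeylAux

/-- Let `h, X₁, X₂ ∈ A₁` be nonzero and `λ₁, λ₂` nonzero integers with `⁅h,X₁⁆ = λ₁ X₁`,
`⁅h,X₂⁆ = λ₂ X₂` and `⁅X₁,X₂⁆ = 0`.  Then `λ₁ λ₂ > 0` and there is a nonzero `a ∈ ℂ` with
`X₁^{|λ₂|} = a • X₂^{|λ₁|}`. -/
theorem statement10 (h X₁ X₂ : Weyl) (hh : h ≠ 0) (hX₁ : X₁ ≠ 0) (hX₂ : X₂ ≠ 0)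
    (l₁ l₂ : ℤ) (hl₁ : l₁ ≠ 0) (hl₂ : l₂ ≠ 0)
    (e₁ : ⁅h, X₁⁆ = (l₁ : ℂ) • X₁) (e₂ : ⁅h, X₂⁆ = (l₂ : ℂ) • X₂)
    (e₃ : ⁅X₁, X₂⁆ = 0) :
    0 < l₁ * l₂ ∧ ∃ a : ℂ, a ≠ 0 ∧ X₁ ^ l₂.natAbs = a • X₂ ^ l₁.natAbs := by
  have hc : Commute X₁ X₂ := by
    rw [Ring.lie_def] at e₃
    exact sub_eq_zero.1 e₃
  have hc' := hc.pow_pow l₂.natAbs l₁.natAbs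
  have h1 := WeylAux.eig_pow e₁ l₂.natAbs
  have h2 := WeylAux.eig_pow e₂ l₁.natAbs
  have hy := pow_ne_zero l₂.natAbs hX₁
  have hz := pow_ne_zero l₁.natAbs hX₂
  have hμ : ((l₂.natAbs : ℂ) * (l₁ : ℂ)) ≠ 0 :=
    mul_ne_zero (by exact_mod_cast Int.natAbs_ne_zero.2 hl₂) (by exact_mod_cast hl₁)
  rcases lt_or_gt_of_ne (mul_ne_zero hl₁ hl₂) with hneg | hpos
  · exfalso
    refine WeylAux.opp_case hμ hy hz h1 ?_ hc'
    rw [h2]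
    congr 1
    have : (l₁.natAbs : ℤ) * l₂ = -((l₂.natAbs : ℤ) * l₁) := by
      rw [Int.natCast_natAbs, Int.natCast_natAbs]
      rcases mul_neg_iff.1 hneg with ⟨ha, hb⟩ | ⟨ha, hb⟩
      · rw [abs_of_pos ha, abs_of_neg hb]; ring
      · rw [abs_of_neg ha, abs_of_pos hb]; ring
    have h3 := congrArg (fun t : ℤ => (t : ℂ)) this
    simp only [Int.cast_mul, Int.cast_neg, Int.cast_natCast] at h3
    exact h3
  · refine ⟨hpos, WeylAux.same_case hμ hy hz h1 ?_ hc'⟩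
    rw [h2]
    congr 1
    have : (l₁.natAbs : ℤ) * l₂ = (l₂.natAbs : ℤ) * l₁ := by
      rw [Int.natCast_natAbs, Int.natCast_natAbs]
      rcases mul_pos_iff.1 hpos with ⟨ha, hb⟩ | ⟨ha, hb⟩
      · rw [abs_of_pos ha, abs_of_pos hb]; ring
      · rw [abs_of_neg ha, abs_of_neg hb]; ring
    have h3 := congrArg (fun t : ℤ => (t : ℂ)) this
    simp only [Int.cast_mul, Int.cast_natCast] at h3
    exact h3
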